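/- **Definitions.** Let $p\in\mathbb R[x_1,\dots,x_n]$, let $\mathrm{Support}(p)\subseteq\mathbb N^n$ be the set of exponent vectors of the monomials of $p$ with nonzero coefficient, and let $\mathrm{New}(p)=\mathrm{conv}(\mathrm{Support}(p))\subseteq\mathbb R^n$. The polynomial $p$ is *SOS* if $p=\sum_{i=1}^s q_i^2$ for some polynomials $q_i$. A *face* of a polytope $N\subseteq\mathbb R^n$ is a nonempty subset $F\subseteq N$ such that $F=N$ or there is an affine function $\pi$ on $\mathbb R^n$ with $\pi=0$ on $F$ and $\pi>0$ on $N\setminus F$; it is *proper* if $F\neq N$. A *face cover* of $p$ is a finite family $F_1,\dots,F_u$ of pairwise disjoint faces of $\mathrm{New}(p)$ with $\mathrm{Support}(p)\subseteq F_1\cup\dots\cup F_u$; $p$ is a *convex cover polynomial* if it has a face cover, and a convex cover polynomial *in the strict sense* if it has a face cover by proper faces. For a finite set $G\subseteq\mathbb N^n$, $\mathrm{SOSS}(p,G)$ means: if $p$ is SOS, then $p=\sum_i q_i^2$ for some $q_1,\dots,q_s$ with $\mathrm{Support}(q_i)\subseteq G$ for all $i$. Let $V(p,G)$ be the set of $a\in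 G$ such that $b+r=2a$ with $b,r\in G$ forces $b=r=a$. For $a\in G+G$ define recursively (taking the smallest solution) $\mathrm{Relat}(a)=\{a/2\}$ if $a=\frac a2+\frac a2$ is the only decomposition $a=b+r$ with $b,r\in G$, and otherwise $\mathrm{Relat}(a)=\bigcup(\mathrm{Relat}(2b)\cup\mathrm{Relat}(2r))$ over all $b\ne r$ in $G$ with $b+r=a$; put $\mathrm{Relat}(a)=\emptyset$ if $a\notin G+G$. For $T\subseteq V(p,G)$ let $\sigma(T)=\{r\in G:\mathrm{Relat}(2r)\subseteq T\}$. If $\mathrm{SOSS}(p,G)$ holds, $p$ is a *split polynomial with respect to* pairwise disjoint nonempty subsets $T_1,\dots,T_u$ of $V(p,G)$ if (i) $\mathrm{Relat}(a+b)\subseteq T_i$ for all $i$ and all $a,b\in\sigma(T_i)$, and (ii) for every $a\in\mathrm{Support}(p)$ there is exactly one $i$ with $\mathrm{Relat}(a)\subseteq T_i$. It is a *split polynomial* if this holds for some finite $G$ with $\mathrm{SOSS}(p,G)$ and some $T_1,\dots,T_u$. **Theorem.** 1. Every convex cover polynomial is a split polynomial. 2. More precisely, let $F_1,\dots,F_u$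 be a face cover of $p$, and let $G\subseteq\mathbb N^n$ be a finite set satisfying $\mathrm{SOSS}(p,G)$ and $\mathrm{conv}(G+G)=\mathrm{New}(p)$; if $p$ is not SOS, assume also $\mathrm{Support}(p)\subseteq G+G$ (for SOS $p$ this inclusion is automatic). Then $p$ is a split polynomial with respect to the sets $T_i=\{a\in V(p,G):2a\in F_i\}$, $i=1,\dots,u$. 3. The converse is not true: there is a polynomial $p$ that is a split polynomial with respect to some $T_1,\dots,T_u\subseteq V(p,G)$, even with $u\ge2$ and $\mathrm{conv}(G+G)=\mathrm{New}(p)$, but is not a convex cover polynomial in the strict sense. -/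

import Mathlib

open MvPolynomial
open scoped Pointwise

noncomputable section

/-- Embed an exponent vector `a ∈ ℕⁿ` into `ℝⁿ`. -/
def toR {n : ℕ} (a : Fin n →₀ ℕ) : Fin n → ℝ := fun i => (a i : ℝ)

/-- `p` is a sum of squares of polynomials. -/
def IsSOS {n : ℕ} (p : MvPolynomial (Fin n) ℝ) : Prop :=
  ∃ (s : ℕ) (q : Fin s → MvPolynomial (Fin n) ℝ), p = ∑ i, (q i) ^ 2

/-- The Newton polytope of `p`: convex hull of its support in `ℝⁿ`. -/
def newton {n : ℕ} (p : MvPolynomial (Fin n) ℝ) : Set (Fin n → ℝ) :=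
  convexHull ℝ (toR '' ↑p.support)

/-- `F` is a (nonempty, exposed) face of `N`: `F` is a nonempty subset of `N`, and either `F = N`
or there is an affine function vanishing on `F` and strictly positive on `N \ F`. -/
def IsFace {n : ℕ} (N F : Set (Fin n → ℝ)) : Prop :=
  F.Nonempty ∧ F ⊆ N ∧ (F = N ∨ ∃ π : (Fin n → ℝ) →ᵃ[ℝ] ℝ,
    (∀ x ∈ F, π x = 0) ∧ ∀ x ∈ N \ F, 0 < π x)

/-- `F` is a proper face of `N`. -/
def IsProperFace {n : ℕ} (N F : Set (Fin n → ℝ)) : Prop :=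
  IsFace N F ∧ F ≠ N

/-- `SOSS(p,G)`: whenever `p` is SOS, it has an SOS decomposition all of whose
summands have support contained in `G`. -/
def SOSS {n : ℕ} (p : MvPolynomial (Fin n) ℝ) (G : Finset (Fin n →₀ ℕ)) : Prop :=
  IsSOS p → ∃ (s : ℕ) (q : Fin s → MvPolynomial (Fin n) ℝ),
    p = ∑ i, (q i) ^ 2 ∧ ∀ i, (q i).support ⊆ G

/-- `V(p,G)`: elements `a ∈ G` whose double has the unique decomposition `a + a` in `G + G`. -/
def VSet {n : ℕ} (G : Finset (Fin n →₀ ℕ)) : Set (Fin n →₀ ℕ) :=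
  {a | a ∈ G ∧ ∀ b ∈ G, ∀ r ∈ G, b + r = a + a → b = a ∧ r = a}

/-- Membership in `Relat(a)` (least fixed point of the recursive definition):
`Relat(a) = {a/2}` if the unique decomposition of `a` in `G + G` is `a/2 + a/2`;
otherwise `Relat(a)` is the union of `Relat(2b) ∪ Relat(2r)` over decompositions
`a = b + r` with `b ≠ r`, `b, r ∈ G`; and `Relat(a) = ∅` if `a ∉ G + G`. -/
inductive RelatMem {n : ℕ} (G : Finset (Fin n →₀ ℕ)) :
    (Fin n →₀ ℕ) → (Fin n →₀ ℕ) → Prop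
  | base (a c : Fin n →₀ ℕ) (hc : c ∈ G) (hcc : c + c = a)
      (huniq : ∀ b ∈ G, ∀ r ∈ G, b + r = a → b = c) : RelatMem G a c
  | stepL (a b r v : Fin n →₀ ℕ) (hb : b ∈ G) (hr : r ∈ G) (hne : b ≠ r)
      (hbr : b + r = a) (hv : RelatMem G (b + b) v) : RelatMem G a v
  | stepR (a b r v : Fin n →₀ ℕ) (hb : b ∈ G) (hr : r ∈ G) (hne : b ≠ r)
      (hbr : b + r = a) (hv : RelatMem G (r + r) v) : RelatMem G a v

/-- `Relat(a)` as a set. -/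
def Relat {n : ℕ} (G : Finset (Fin n →₀ ℕ)) (a : Fin n →₀ ℕ) : Set (Fin n →₀ ℕ) :=
  {v | RelatMem G a v}

/-- `σ(T) = {r ∈ G : Relat(2r) ⊆ T}`. -/
def sigmaSet {n : ℕ} (G : Finset (Fin n →₀ ℕ)) (T : Set (Fin n →₀ ℕ)) :
    Set (Fin n →₀ ℕ) :=
  {r | r ∈ G ∧ Relat G (r + r) ⊆ T}

/-- `p` is a split polynomial with respect to `T₁, …, T_u ⊆ V(p,G)`. -/
def IsSplit {n : ℕ} (p : MvPolynomial (Fin n) ℝ) (G : Finset (Fin n →₀ ℕ))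
    (u : ℕ) (T : Fin u → Set (Fin n →₀ ℕ)) : Prop :=
  SOSS p G ∧ (∀ i, T i ⊆ VSet G) ∧ (∀ i, (T i).Nonempty) ∧
  (∀ i j, i ≠ j → Disjoint (T i) (T j)) ∧
  (∀ i, ∀ a ∈ sigmaSet G (T i), ∀ b ∈ sigmaSet G (T i), Relat G (a + b) ⊆ T i) ∧
  ∀ a ∈ p.support, ∃! i, Relat G a ⊆ T i

/-- `p` is a split polynomial: it is one with respect to some finite `G` satisfying `SOSS(p,G)`
and some `T₁, …, T_u ⊆ V(p,G)`. -/
def IsSplitPolynomial {n : ℕ} (p : MvPolynomial (Fin n) ℝ) : Prop :=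
  ∃ (G : Finset (Fin n →₀ ℕ)) (u : ℕ) (T : Fin u → Set (Fin n →₀ ℕ)), IsSplit p G u T

/-- `F₁, …, F_u` are pairwise disjoint faces of `New(p)` covering `Support(p)`. -/
def IsFaceCover {n : ℕ} (p : MvPolynomial (Fin n) ℝ) (u : ℕ)
    (F : Fin u → Set (Fin n → ℝ)) : Prop :=
  (∀ i, IsFace (newton p) (F i)) ∧
  (∀ i j, i ≠ j → Disjoint (F i) (F j)) ∧
  toR '' ↑p.support ⊆ ⋃ i, F i

/-- `p` is a convex cover polynomial; `New(p)` counts as a face of itself. -/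
def IsConvexCover {n : ℕ} (p : MvPolynomial (Fin n) ℝ) : Prop :=
  ∃ (u : ℕ) (F : Fin u → Set (Fin n → ℝ)), IsFaceCover p u F

/-- `p` is a convex cover polynomial in the strict sense, where all the faces are proper. -/
def IsProperConvexCover {n : ℕ} (p : MvPolynomial (Fin n) ℝ) : Prop :=
  ∃ (u : ℕ) (F : Fin u → Set (Fin n → ℝ)),
    IsFaceCover p u F ∧ ∀ i, IsProperFace (newton p) (F i)

/-- `conv(G + G) = New(p)`. -/
def HullEqNewton {n : ℕ} (p : MvPolynomial (Fin n) ℝ) (G : Finset (Fin n →₀ ℕ)) : Prop :=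
  convexHull ℝ (toR '' ((G : Set (Fin n →₀ ℕ)) + (G : Set (Fin n →₀ ℕ)))) = newton p

end

/-!
Write `δ(a) = 2a ∈ ℝⁿ`. Everything rests on `δ(σ(T)) ⊆ conv δ(T)`, for arbitrary `T`: an extreme
point of `conv δ(σ(T))` is `2c` with `c ∈ σ(T)`, and `2c = b + r` with `b, r ∈ G` forces
`b, r ∈ σ(T)`, hence `b = r = c`; so `c ∈ V(p,G)` and `c ∈ Relat(2c) ⊆ T`.

* `T = ∅` gives `σ(∅) = ∅`, that is, `Relat(2c) ≠ ∅` for `c ∈ G`.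
* `T = V(p,G)` gives `σ(T) = G`, hence `conv(G + G) = conv δ(V(p,G))`.
* `T = {a ∈ V(p,G) : 2a ∈ F}`, for a face `F` of `conv(G + G)`, gives `δ(σ(T)) ⊆ F`. As `b + r` is
  the midpoint of `2b` and `2r`, it lies in `F` exactly when both of them do. So `σ(T) + σ(T) ⊆ F`,
  and membership in `F` is inherited along the recursion defining `Relat`.

With the single part `T₁ = V(p,G)` every polynomial is split. The substance is the splitting along a
given face cover; for `p = ∑ qᵢ²` the exponents of the `qᵢ` form a set `G` with
`conv(G + G) = New(p)`, to which it applies. The converse fails for `1 + x² + x⁶` and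
`G = {0, 1, 3}`: no element of `G` is the midpoint of two others, so there is a splitting into
singletons, but the only face of the Newton polytope `[0, 6]` containing `2` is `[0, 6]` itself.
-/

section ConvexGeometry

theorem subset_convexHull_of_extremePoints_subset {E : Type*} [AddCommGroup E] [Module ℝ E]
    [TopologicalSpace E] [T2Space E] [IsTopologicalAddGroup E] [ContinuousSMul ℝ E]
    [LocallyConvexSpace ℝ E] {s t : Set E} (hs : s.Finite)
    (h : (convexHull ℝ s).extremePoints ℝ ⊆ t) : s ⊆ convexHull ℝ t := by
  have hclosed : IsClosed (convexHull ℝ ((convexHull ℝ s).extremePoints ℝ)) :=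
    (hs.subset extremePoints_convexHull_subset).isClosed_convexHull ℝ
  calc s ⊆ convexHull ℝ s := subset_convexHull ℝ s
    _ = closure (convexHull ℝ ((convexHull ℝ s).extremePoints ℝ)) :=
      (closure_convexHull_extremePoints (hs.isCompact_convexHull ℝ) (convex_convexHull ℝ s)).symm
    _ = convexHull ℝ ((convexHull ℝ s).extremePoints ℝ) := hclosed.closure_eq
    _ ⊆ convexHull ℝ t := convexHull_mono h

theorem exists_mem_of_isExtreme_convexHull {𝕜 E : Type*} [Ring 𝕜] [LinearOrder 𝕜]
    [IsStrictOrderedRing 𝕜] [AddCommGroup E] [Module 𝕜 E] {s F : Set E}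
    (hF : IsExtreme 𝕜 (convexHull 𝕜 s) F) (hne : F.Nonempty) : ∃ x ∈ s, x ∈ F := by
  by_contra! hdisj
  obtain ⟨x, hx⟩ := hne
  have hsub : convexHull 𝕜 s ⊆ convexHull 𝕜 s \ F :=
    convexHull_min (fun y hy => ⟨subset_convexHull 𝕜 s hy, hdisj y hy⟩)
      (hF.convex_sdiff (convex_convexHull 𝕜 s))
  exact (hsub (hF.subset hx)).2 hx

theorem eq_segment_of_isExtreme {𝕜 E : Type*} [Ring 𝕜] [PartialOrder 𝕜]
    [IsOrderedRing 𝕜] [AddCommGroup E] [Module 𝕜 E] {x y z : E} {F : Set E}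
    (hF : IsExtreme 𝕜 (segment 𝕜 x y) F) (hconv : Convex 𝕜 F) (hz : z ∈ F)
    (hzxy : z ∈ openSegment 𝕜 x y) : F = segment 𝕜 x y :=
  have hx := left_mem_segment 𝕜 x y
  have hy := right_mem_segment 𝕜 x y
  hF.subset.antisymm <| hconv.segment_subset (hF.left_mem_of_mem_openSegment hx hy hz hzxy)
    (hF.right_mem_of_mem_openSegment hx hy hz hzxy)

variable {n : ℕ} {N F : Set (Fin n → ℝ)}

theorem IsFace.isExposed (hF : IsFace N F) : IsExposed ℝ N F := by
  obtain ⟨⟨x₀, hx₀⟩, hsub, rfl | ⟨π, hzero, hpos⟩⟩ := hF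
  · exact IsExposed.refl F
  have hπ (x y) : -π.linear y ≤ -π.linear x ↔ π x ≤ π y := by
    rw [neg_le_neg_iff, ← sub_nonneg, ← map_sub, ← vsub_eq_sub, π.linearMap_vsub, vsub_eq_sub,
      sub_nonneg]
  refine fun _ => ⟨(-π.linear).toContinuousLinearMap, ?_⟩
  ext x
  change x ∈ F ↔ x ∈ N ∧ ∀ y ∈ N, -π.linear y ≤ -π.linear x
  simp only [hπ]
  refine ⟨fun hx => ⟨hsub hx, fun y hy => ?_⟩, fun ⟨hxN, hmin⟩ => ?_⟩
  · by_cases hyF : y ∈ F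
    · rw [hzero x hx, hzero y hyF]
    · exact hzero x hx ▸ (hpos y ⟨hy, hyF⟩).le
  · by_contra hxF
    exact (hpos x ⟨hxN, hxF⟩).not_ge (hzero x₀ hx₀ ▸ hmin x₀ (hsub hx₀))

end ConvexGeometry

section Exponents

variable {n : ℕ}

theorem toR_add (a b : Fin n →₀ ℕ) : toR (a + b) = toR a + toR b :=
  funext fun i => Nat.cast_add (a i) (b i)

theorem toR_injective : Function.Injective (toR : (Fin n →₀ ℕ) → Fin n → ℝ) :=
  fun _ _ h => Finsupp.ext fun i => Nat.cast_injective (congrFun h i)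

theorem toR_add_mem_openSegment (b r : Fin n →₀ ℕ) :
    toR (b + r) ∈ openSegment ℝ (toR (b + b)) (toR (r + r)) := by
  refine ⟨1 / 2, 1 / 2, by norm_num, by norm_num, by norm_num, ?_⟩
  simp only [toR_add]
  module

theorem add_self_injective : Function.Injective fun a : Fin n →₀ ℕ => a + a :=
  fun a b h => Finsupp.ext fun i => by
    have := DFunLike.congr_fun h i
    simp only [Finsupp.add_apply] at this
    omega

/-- The points `2a ∈ ℝⁿ` for `a ∈ T`; this is the `δ(T)` of the introduction. -/
def doubles (T : Set (Fin n →₀ ℕ)) : Set (Fin n → ℝ) := (fun a => toR (a + a)) '' T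

/-- The polytope `conv(G + G)`. -/
def sumHull (G : Finset (Fin n →₀ ℕ)) : Set (Fin n → ℝ) :=
  convexHull ℝ (toR '' ((G : Set (Fin n →₀ ℕ)) + (G : Set (Fin n →₀ ℕ))))

theorem hullEqNewton_iff {p : MvPolynomial (Fin n) ℝ} {G : Finset (Fin n →₀ ℕ)} :
    HullEqNewton p G ↔ sumHull G = newton p :=
  Iff.rfl

theorem toR_add_mem_sumHull {G : Finset (Fin n →₀ ℕ)} {b r : Fin n →₀ ℕ} (hb : b ∈ G)
    (hr : r ∈ G) : toR (b + r) ∈ sumHull G :=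
  subset_convexHull ℝ _ ⟨_, Set.add_mem_add hb hr, rfl⟩

end Exponents

section Relat

variable {n : ℕ} {G : Finset (Fin n →₀ ℕ)} {T : Set (Fin n →₀ ℕ)} {b r c v : Fin n →₀ ℕ}

theorem relat_subset_vSet (G : Finset (Fin n →₀ ℕ)) (a : Fin n →₀ ℕ) : Relat G a ⊆ VSet G := by
  intro v hv
  induction hv with
  | base a c hc hcc huniq =>
    subst hcc
    exact ⟨hc, fun b hb r hr h => ⟨huniq b hb r hr h, huniq r hr b hb (by rwa [add_comm])⟩⟩
  | stepL _ _ _ _ _ _ _ _ _ ih => exact ih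
  | stepR _ _ _ _ _ _ _ _ _ ih => exact ih

theorem mem_relat_add_self (hv : v ∈ VSet G) : v ∈ Relat G (v + v) :=
  .base _ v hv.1 rfl fun b hb r hr h => (hv.2 b hb r hr h).1

theorem relat_add_self (hv : v ∈ VSet G) : Relat G (v + v) = {v} := by
  refine Set.Subset.antisymm (fun w hw => ?_) (Set.singleton_subset_iff.mpr (mem_relat_add_self hv))
  cases hw with
  | base _ _ hw hww _ => exact (hv.2 w hw w hw hww).1
  | stepL _ b r _ hb hr hne hbr _ | stepR _ b r _ hb hr hne hbr _ =>
    obtain ⟨rfl, rfl⟩ := hv.2 b hb r hr hbr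
    exact absurd rfl hne

theorem relat_add_self_subset_left (hb : b ∈ G) (hr : r ∈ G) :
    Relat G (b + b) ⊆ Relat G (b + r) := by
  rcases eq_or_ne b r with rfl | hne
  · exact subset_rfl
  · exact fun v hv => .stepL _ b r v hb hr hne rfl hv

theorem relat_add_self_subset_right (hb : b ∈ G) (hr : r ∈ G) :
    Relat G (r + r) ⊆ Relat G (b + r) :=
  add_comm r b ▸ relat_add_self_subset_left hr hb

theorem mem_vSet_of_toR_add_self_mem_extremePoints (hc : c ∈ sigmaSet G T)
    (hext : toR (c + c) ∈ (convexHull ℝ (doubles (sigmaSet G T))).extremePoints ℝ) :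
    c ∈ VSet G := by
  refine ⟨hc.1, fun b hb r hr hbr => ?_⟩
  have hbσ : b ∈ sigmaSet G T := ⟨hb, (hbr ▸ relat_add_self_subset_left hb hr).trans hc.2⟩
  have hrσ : r ∈ sigmaSet G T := ⟨hr, (hbr ▸ relat_add_self_subset_right hb hr).trans hc.2⟩
  have hmid : toR (c + c) ∈ openSegment ℝ (toR (b + b)) (toR (r + r)) :=
    hbr ▸ toR_add_mem_openSegment b r
  obtain ⟨hbc, hrc⟩ := (mem_extremePoints.mp hext).2 _
    (subset_convexHull ℝ _ ⟨b, hbσ, rfl⟩) _ (subset_convexHull ℝ _ ⟨r, hrσ, rfl⟩) hmid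
  exact ⟨add_self_injective (toR_injective hbc), add_self_injective (toR_injective hrc)⟩

theorem doubles_sigmaSet_subset_convexHull (G : Finset (Fin n →₀ ℕ)) (T : Set (Fin n →₀ ℕ)) :
    doubles (sigmaSet G T) ⊆ convexHull ℝ (doubles T) := by
  have hfin : (doubles (sigmaSet G T)).Finite :=
    (G.finite_toSet.subset fun _ ha => ha.1).image _
  refine subset_convexHull_of_extremePoints_subset hfin fun x hx => ?_
  obtain ⟨c, hc, rfl⟩ := extremePoints_convexHull_subset hx
  have hcV : c ∈ VSet G := mem_vSet_of_toR_add_self_mem_extremePoints hc hx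
  exact ⟨c, hc.2 (mem_relat_add_self hcV), rfl⟩

theorem relat_add_self_nonempty (hc : c ∈ G) : (Relat G (c + c)).Nonempty := by
  by_contra! hempty
  have := doubles_sigmaSet_subset_convexHull G ∅ ⟨c, ⟨hc, hempty.subset⟩, rfl⟩
  simp [doubles] at this

theorem relat_add_nonempty (hb : b ∈ G) (hr : r ∈ G) : (Relat G (b + r)).Nonempty :=
  (relat_add_self_nonempty hb).mono (relat_add_self_subset_left hb hr)

theorem vSet_nonempty (hG : G.Nonempty) : (VSet G).Nonempty :=
  let ⟨_, hc⟩ := hG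
  (relat_add_self_nonempty hc).mono (relat_subset_vSet G _)

theorem sumHull_eq_convexHull_doubles_vSet (G : Finset (Fin n →₀ ℕ)) :
    sumHull G = convexHull ℝ (doubles (VSet G)) := by
  have hdouble {c} (hc : c ∈ G) : toR (c + c) ∈ convexHull ℝ (doubles (VSet G)) :=
    doubles_sigmaSet_subset_convexHull G (VSet G) ⟨c, ⟨hc, relat_subset_vSet G _⟩, rfl⟩
  refine Set.Subset.antisymm (convexHull_min ?_ (convex_convexHull ℝ _)) (convexHull_mono ?_)
  · rintro _ ⟨_, ⟨b, hb, r, hr, rfl⟩, rfl⟩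
    exact (convex_convexHull ℝ _).openSegment_subset (hdouble hb) (hdouble hr)
      (toR_add_mem_openSegment b r)
  · rintro _ ⟨v, hv, rfl⟩
    exact ⟨v + v, Set.add_mem_add hv.1 hv.1, rfl⟩

end Relat

section Face

variable {n : ℕ} {G : Finset (Fin n →₀ ℕ)} {F : Set (Fin n → ℝ)} {a b r : Fin n →₀ ℕ}

/-- The part `{a ∈ V(p,G) : 2a ∈ F}` of a splitting attached to a face `F` of `conv(G + G)`. -/
def faceVertices (G : Finset (Fin n →₀ ℕ)) (F : Set (Fin n → ℝ)) : Set (Fin n →₀ ℕ) :=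
  {a | a ∈ VSet G ∧ toR (a + a) ∈ F}

theorem faceVertices_nonempty (hF : IsExtreme ℝ (sumHull G) F) (hne : F.Nonempty) :
    (faceVertices G F).Nonempty := by
  rw [sumHull_eq_convexHull_doubles_vSet] at hF
  obtain ⟨_, ⟨v, hv, rfl⟩, hvF⟩ := exists_mem_of_isExtreme_convexHull hF hne
  exact ⟨v, hv, hvF⟩

theorem relat_subset_faceVertices (hF : IsExtreme ℝ (sumHull G) F) (ha : toR a ∈ F) :
    Relat G a ⊆ faceVertices G F := by
  refine fun v hv => ⟨relat_subset_vSet G a hv, ?_⟩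
  induction hv with
  | base a c _ hcc _ => rwa [hcc]
  | stepL a b r _ hb hr _ hbr _ ih =>
    exact ih (hF.left_mem_of_mem_openSegment (toR_add_mem_sumHull hb hb)
      (toR_add_mem_sumHull hr hr) (hbr ▸ ha) (toR_add_mem_openSegment b r))
  | stepR a b r _ hb hr _ hbr _ ih =>
    exact ih (hF.right_mem_of_mem_openSegment (toR_add_mem_sumHull hb hb)
      (toR_add_mem_sumHull hr hr) (hbr ▸ ha) (toR_add_mem_openSegment b r))

theorem doubles_sigmaSet_faceVertices_subset (hF : Convex ℝ F) :
    doubles (sigmaSet G (faceVertices G F)) ⊆ F := by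
  refine (doubles_sigmaSet_subset_convexHull G _).trans (convexHull_min ?_ hF)
  rintro _ ⟨a, ha, rfl⟩
  exact ha.2

theorem toR_add_mem_of_mem_sigmaSet (hF : Convex ℝ F) (hb : b ∈ sigmaSet G (faceVertices G F))
    (hr : r ∈ sigmaSet G (faceVertices G F)) : toR (b + r) ∈ F :=
  hF.openSegment_subset (doubles_sigmaSet_faceVertices_subset hF ⟨b, hb, rfl⟩)
    (doubles_sigmaSet_faceVertices_subset hF ⟨r, hr, rfl⟩) (toR_add_mem_openSegment b r)

theorem disjoint_faceVertices {F' : Set (Fin n → ℝ)} (h : Disjoint F F') :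
    Disjoint (faceVertices G F) (faceVertices G F') :=
  Set.disjoint_left.mpr fun _ ha ha' => Set.disjoint_left.mp h ha.2 ha'.2

/-- A cover of `Support(p)` by pairwise disjoint nonempty faces of a convex set `N`, where a face is
a convex extreme subset and need not be exposed. -/
structure IsExtremeCover {u : ℕ} (N : Set (Fin n → ℝ)) (p : MvPolynomial (Fin n) ℝ)
    (F : Fin u → Set (Fin n → ℝ)) : Prop where
  nonempty : ∀ i, (F i).Nonempty
  convex : ∀ i, Convex ℝ (F i)
  isExtreme : ∀ i, IsExtreme ℝ N (F i)
  disjoint : ∀ i j, i ≠ j → Disjoint (F i) (F j)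
  support_subset : toR '' ↑p.support ⊆ ⋃ i, F i

theorem IsFaceCover.isExtremeCover {p : MvPolynomial (Fin n) ℝ} {u : ℕ}
    {F : Fin u → Set (Fin n → ℝ)} (hF : IsFaceCover p u F) : IsExtremeCover (newton p) p F where
  nonempty i := (hF.1 i).1
  convex i := (hF.1 i).isExposed.convex (convex_convexHull ℝ _)
  isExtreme i := (hF.1 i).isExposed.isExtreme
  disjoint := hF.2.1
  support_subset := hF.2.2

theorem IsExtremeCover.isSplit {p : MvPolynomial (Fin n) ℝ} {u : ℕ}
    {F : Fin u → Set (Fin n → ℝ)} (hF : IsExtremeCover (sumHull G) p F) (hG : SOSS p G)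
    (hp : (p.support : Set (Fin n →₀ ℕ)) ⊆ (G : Set (Fin n →₀ ℕ)) + (G : Set (Fin n →₀ ℕ))) :
    IsSplit p G u fun i => faceVertices G (F i) := by
  have hdisj (i j) (hij : i ≠ j) : Disjoint (faceVertices G (F i)) (faceVertices G (F j)) :=
    disjoint_faceVertices (hF.disjoint i j hij)
  refine ⟨hG, fun i a ha => ha.1, fun i => faceVertices_nonempty (hF.isExtreme i) (hF.nonempty i),
    hdisj, fun i a ha b hb => relat_subset_faceVertices (hF.isExtreme i)
      (toR_add_mem_of_mem_sigmaSet (hF.convex i) ha hb), fun a ha => ?_⟩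
  obtain ⟨i, hi⟩ := Set.mem_iUnion.mp (hF.support_subset ⟨a, ha, rfl⟩)
  have hsub : Relat G a ⊆ faceVertices G (F i) := relat_subset_faceVertices (hF.isExtreme i) hi
  refine ⟨i, hsub, fun j hj => ?_⟩
  obtain ⟨b, hb, r, hr, rfl⟩ := hp ha
  obtain ⟨v, hv⟩ := relat_add_nonempty hb hr
  by_contra hji
  exact Set.disjoint_left.mp (hdisj j i hji) (hj hv) (hsub hv)

end Face

section SumOfSquares

variable {n s : ℕ} {G : Finset (Fin n →₀ ℕ)} {q : Fin s → MvPolynomial (Fin n) ℝ}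

theorem support_sum_sq_subset (hq : ∀ i, (q i).support ⊆ G) :
    ((∑ i, q i ^ 2).support : Set (Fin n →₀ ℕ)) ⊆
      (G : Set (Fin n →₀ ℕ)) + (G : Set (Fin n →₀ ℕ)) := by
  classical
  intro a ha
  obtain ⟨i, -, hi⟩ := Finset.mem_biUnion.mp (support_sum ha)
  rw [sq] at hi
  obtain ⟨b, hb, r, hr, rfl⟩ := Finset.mem_add.mp (support_mul _ _ hi)
  exact Set.add_mem_add (hq i hb) (hq i hr)

theorem SOSS.support_subset {p : MvPolynomial (Fin n) ℝ} (hG : SOSS p G) (hp : IsSOS p) :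
    (p.support : Set (Fin n →₀ ℕ)) ⊆ (G : Set (Fin n →₀ ℕ)) + (G : Set (Fin n →₀ ℕ)) := by
  obtain ⟨s, q, rfl, hq⟩ := hG hp
  exact support_sum_sq_subset hq

theorem coeff_add_self_sum_sq (hq : ∀ i, (q i).support ⊆ G) {v : Fin n →₀ ℕ} (hv : v ∈ VSet G) :
    coeff (v + v) (∑ i, q i ^ 2) = ∑ i, coeff v (q i) ^ 2 := by
  rw [coeff_sum]
  refine Finset.sum_congr rfl fun i _ => ?_
  rw [sq, sq, coeff_mul, Finset.sum_eq_single (v, v)]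
  · rintro ⟨b, r⟩ hbr hne
    by_contra hcoeff
    have hb : b ∈ G := hq i (mem_support_iff.mpr (left_ne_zero_of_mul hcoeff))
    have hr : r ∈ G := hq i (mem_support_iff.mpr (right_ne_zero_of_mul hcoeff))
    obtain ⟨rfl, rfl⟩ := hv.2 b hb r hr (Finset.HasAntidiagonal.mem_antidiagonal.mp hbr)
    exact hne rfl
  · simp

/-- The exponents occurring in at least one of the polynomials `q₁, …, q_s`. -/
def unionSupport (q : Fin s → MvPolynomial (Fin n) ℝ) : Finset (Fin n →₀ ℕ) :=
  Finset.univ.biUnion fun i => (q i).support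

theorem mem_unionSupport {a : Fin n →₀ ℕ} : a ∈ unionSupport q ↔ ∃ i, a ∈ (q i).support := by
  simp only [unionSupport, Finset.mem_biUnion, Finset.mem_univ, true_and]

theorem support_subset_unionSupport (q : Fin s → MvPolynomial (Fin n) ℝ) (i : Fin s) :
    (q i).support ⊆ unionSupport q :=
  fun _ ha => mem_unionSupport.mpr ⟨i, ha⟩

theorem add_self_mem_support_sum_sq {v : Fin n →₀ ℕ} (hv : v ∈ VSet (unionSupport q)) :
    v + v ∈ (∑ i, q i ^ 2).support := by
  rw [mem_support_iff, coeff_add_self_sum_sq (support_subset_unionSupport q) hv]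
  obtain ⟨i, hi⟩ := mem_unionSupport.mp hv.1
  exact (Finset.sum_pos' (fun j _ => sq_nonneg (coeff v (q j)))
    ⟨i, Finset.mem_univ i, sq_pos_of_ne_zero (mem_support_iff.mp hi)⟩).ne'

theorem soss_sum_sq (q : Fin s → MvPolynomial (Fin n) ℝ) :
    SOSS (∑ i, q i ^ 2) (unionSupport q) :=
  fun _ => ⟨s, q, rfl, support_subset_unionSupport q⟩

theorem hullEqNewton_sum_sq (q : Fin s → MvPolynomial (Fin n) ℝ) :
    HullEqNewton (∑ i, q i ^ 2) (unionSupport q) := by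
  rw [hullEqNewton_iff]
  refine Set.Subset.antisymm ?_ <| convexHull_mono <| Set.image_mono <|
    support_sum_sq_subset (support_subset_unionSupport q)
  rw [sumHull_eq_convexHull_doubles_vSet]
  refine convexHull_mono ?_
  rintro _ ⟨v, hv, rfl⟩
  exact ⟨v + v, add_self_mem_support_sum_sq hv, rfl⟩

theorem IsSOS.exists_soss_hullEqNewton {p : MvPolynomial (Fin n) ℝ} (hp : IsSOS p) :
    ∃ G : Finset (Fin n →₀ ℕ), SOSS p G ∧ HullEqNewton p G := by
  obtain ⟨s, q, rfl⟩ := hp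
  exact ⟨unionSupport q, soss_sum_sq q, hullEqNewton_sum_sq q⟩

end SumOfSquares

section Splitting

variable {n u : ℕ} {p : MvPolynomial (Fin n) ℝ} {G : Finset (Fin n →₀ ℕ)}

theorem isSplit_vSet (hG : SOSS p G) (hne : G.Nonempty) : IsSplit p G 1 fun _ => VSet G :=
  ⟨hG, fun _ => subset_rfl, fun _ => vSet_nonempty hne,
    fun i j hij => absurd (Subsingleton.elim i j) hij,
    fun _ _ _ _ _ => relat_subset_vSet G _,
    fun _ _ => ⟨0, relat_subset_vSet G _, fun _ _ => Subsingleton.elim _ _⟩⟩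

theorem isSplitPolynomial (p : MvPolynomial (Fin n) ℝ) : IsSplitPolynomial p := by
  suffices ∃ G : Finset (Fin n →₀ ℕ), SOSS p G ∧ G.Nonempty by
    obtain ⟨G, hG, hne⟩ := this
    exact ⟨G, 1, _, isSplit_vSet hG hne⟩
  by_cases hp : IsSOS p
  · obtain ⟨s, q, rfl⟩ := hp
    exact ⟨insert 0 (unionSupport q), fun _ => ⟨s, q, rfl, fun i =>
      (support_subset_unionSupport q i).trans (Finset.subset_insert _ _)⟩,
      Finset.insert_nonempty _ _⟩
  · exact ⟨{0}, fun h => absurd h hp, Finset.singleton_nonempty 0⟩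

theorem isSplit_singleton {e : Fin u → Fin n →₀ ℕ} (hG : SOSS p G) (he : Function.Injective e)
    (hGV : (G : Set (Fin n →₀ ℕ)) ⊆ VSet G) (heG : ∀ i, e i ∈ G)
    (hp : (p.support : Set (Fin n →₀ ℕ)) ⊆ Set.range fun i => e i + e i) :
    IsSplit p G u fun i => {e i} := by
  have hrelat (i) : Relat G (e i + e i) = {e i} := relat_add_self (hGV (heG i))
  refine ⟨hG, fun i => Set.singleton_subset_iff.mpr (hGV (heG i)),
    fun i => Set.singleton_nonempty _, fun i j hij => Set.disjoint_singleton.mpr (he.ne hij),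
    fun i a ha b hb => ?_, fun a ha => ?_⟩
  · have hσ {a} (ha : a ∈ sigmaSet G {e i}) : a = e i := ha.2 (mem_relat_add_self (hGV ha.1))
    rw [hσ ha, hσ hb, hrelat]
  · obtain ⟨i, rfl⟩ := hp ha
    refine ⟨i, (hrelat i).subset, fun j hj => ?_⟩
    rw [hrelat] at hj
    exact (he (Set.singleton_subset_singleton.mp hj)).symm

theorem not_isProperConvexCover_of_mem_openSegment {x y : Fin n → ℝ} {c : Fin n →₀ ℕ}
    (hN : newton p = segment ℝ x y) (hc : c ∈ p.support) (hcxy : toR c ∈ openSegment ℝ x y) :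
    ¬ IsProperConvexCover p := by
  rintro ⟨u, F, ⟨-, -, hcov⟩, hprop⟩
  obtain ⟨i, hi⟩ := Set.mem_iUnion.mp (hcov ⟨c, hc, rfl⟩)
  have hexp : IsExposed ℝ (segment ℝ x y) (F i) := hN ▸ (hprop i).1.isExposed
  exact (hprop i).2 <| hN ▸ eq_segment_of_isExtreme hexp.isExtreme
    (hexp.convex (convex_segment x y)) hi hcxy

end Splitting

section Counterexample

theorem support_sum_sq_monomial {n u : ℕ} (e : Fin u → Fin n →₀ ℕ) :
    ((∑ i, monomial (e i) (1 : ℝ) ^ 2).support : Set (Fin n →₀ ℕ)) =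
      Set.range fun i => e i + e i := by
  ext a
  simp only [monomial_pow, one_pow, two_nsmul, Finset.mem_coe, mem_support_iff, coeff_sum,
    coeff_monomial, Finset.sum_boole, ne_eq, Nat.cast_eq_zero, Finset.card_eq_zero,
    Finset.filter_eq_empty_iff, Finset.mem_univ, true_implies, not_forall, not_not, Set.mem_range]

/-- The exponents `0, 1, 3` of `1, x, x³`: the middle one lies strictly between the others, yet none
of the three is the midpoint of two others. -/
noncomputable def gapExponent (i : Fin 3) : Fin 1 →₀ ℕ := Finsupp.single 0 (![0, 1, 3] i)

theorem gapExponent_add_eq_add_self {i j l : Fin 3}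
    (h : gapExponent i + gapExponent j = gapExponent l + gapExponent l) : i = l ∧ j = l := by
  have hgap : ∀ i j l : Fin 3,
      (![0, 1, 3] i + ![0, 1, 3] j : ℕ) = ![0, 1, 3] l + ![0, 1, 3] l → i = l ∧ j = l := by decide
  simp only [gapExponent, ← Finsupp.single_add] at h
  exact hgap i j l (Finsupp.single_injective 0 h)

theorem gapExponent_injective : Function.Injective gapExponent := fun _ _ h =>
  (gapExponent_add_eq_add_self (congrArg₂ (· + ·) h h)).1

/-- The monomials `1, x, x³`. -/
noncomputable def gapMonomial (i : Fin 3) : MvPolynomial (Fin 1) ℝ := monomial (gapExponent i) 1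

theorem mem_unionSupport_gapMonomial {a : Fin 1 →₀ ℕ} :
    a ∈ unionSupport gapMonomial ↔ ∃ i, gapExponent i = a := by
  simp [mem_unionSupport, gapMonomial, support_monomial, eq_comm]

theorem support_sum_sq_gapMonomial :
    ((∑ i, gapMonomial i ^ 2).support : Set (Fin 1 →₀ ℕ)) =
      Set.range fun i => gapExponent i + gapExponent i :=
  support_sum_sq_monomial gapExponent

theorem unionSupport_gapMonomial_subset_vSet :
    (unionSupport gapMonomial : Set (Fin 1 →₀ ℕ)) ⊆ VSet (unionSupport gapMonomial) := by
  refine fun a ha => ⟨ha, fun b hb r hr hbr => ?_⟩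
  obtain ⟨l, rfl⟩ := mem_unionSupport_gapMonomial.mp ha
  obtain ⟨i, rfl⟩ := mem_unionSupport_gapMonomial.mp hb
  obtain ⟨j, rfl⟩ := mem_unionSupport_gapMonomial.mp hr
  obtain ⟨rfl, rfl⟩ := gapExponent_add_eq_add_self hbr
  exact ⟨rfl, rfl⟩

theorem isSplit_sum_sq_gapMonomial :
    IsSplit (∑ i, gapMonomial i ^ 2) (unionSupport gapMonomial) 3 fun i => {gapExponent i} :=
  isSplit_singleton (soss_sum_sq gapMonomial) gapExponent_injective
    unionSupport_gapMonomial_subset_vSet (fun i => mem_unionSupport_gapMonomial.mpr ⟨i, rfl⟩)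
    support_sum_sq_gapMonomial.subset

theorem toR_gapExponent_add_self_one_mem_openSegment :
    toR (gapExponent 1 + gapExponent 1) ∈
      openSegment ℝ (toR (gapExponent 0 + gapExponent 0))
        (toR (gapExponent 2 + gapExponent 2)) := by
  refine ⟨2 / 3, 1 / 3, by norm_num, by norm_num, by norm_num, funext fun x => ?_⟩
  fin_cases x
  simp [toR, gapExponent]
  norm_num

theorem newton_sum_sq_gapMonomial :
    newton (∑ i, gapMonomial i ^ 2) =
      segment ℝ (toR (gapExponent 0 + gapExponent 0)) (toR (gapExponent 2 + gapExponent 2)) := by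
  rw [newton, support_sum_sq_gapMonomial, ← Set.range_comp']
  refine Set.Subset.antisymm (convexHull_min ?_ (convex_segment _ _)) <|
    (convex_convexHull ℝ _).segment_subset (subset_convexHull ℝ _ ⟨0, rfl⟩)
      (subset_convexHull ℝ _ ⟨2, rfl⟩)
  rintro _ ⟨i, rfl⟩
  fin_cases i
  · exact left_mem_segment ℝ _ _
  · exact openSegment_subset_segment ℝ _ _ toR_gapExponent_add_self_one_mem_openSegment
  · exact right_mem_segment ℝ _ _

theorem not_isProperConvexCover_sum_sq_gapMonomial :
    ¬ IsProperConvexCover (∑ i, gapMonomial i ^ 2) := by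
  refine not_isProperConvexCover_of_mem_openSegment newton_sum_sq_gapMonomial ?_
    toR_gapExponent_add_self_one_mem_openSegment
  rw [← Finset.mem_coe, support_sum_sq_gapMonomial]
  exact ⟨1, rfl⟩

end Counterexample

theorem statement9_general :
    (∀ (n : ℕ) (p : MvPolynomial (Fin n) ℝ), IsSplitPolynomial p) ∧
    (∀ (n : ℕ) (p : MvPolynomial (Fin n) ℝ) (u : ℕ) (F : Fin u → Set (Fin n → ℝ)),
      IsSOS p → IsExtremeCover (newton p) p F →
      ∃ G : Finset (Fin n →₀ ℕ), HullEqNewton p G ∧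
        IsSplit p G u fun i => faceVertices G (F i)) ∧
    (∀ (n : ℕ) (p : MvPolynomial (Fin n) ℝ) (u : ℕ) (F : Fin u → Set (Fin n → ℝ))
      (G : Finset (Fin n →₀ ℕ)), IsExtremeCover (sumHull G) p F → SOSS p G →
        (IsSOS p ∨ (p.support : Set (Fin n →₀ ℕ)) ⊆
          (G : Set (Fin n →₀ ℕ)) + (G : Set (Fin n →₀ ℕ))) →
        IsSplit p G u fun i => faceVertices G (F i)) ∧
    (∃ (n : ℕ) (p : MvPolynomial (Fin n) ℝ) (G : Finset (Fin n →₀ ℕ)) (u : ℕ)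
      (T : Fin u → Set (Fin n →₀ ℕ)),
      2 ≤ u ∧ HullEqNewton p G ∧ IsSplit p G u T ∧ ¬ IsProperConvexCover p) := by
  refine ⟨fun n p => isSplitPolynomial p, fun n p u F hp hF => ?_,
    fun n p u F G hF hG hp => hF.isSplit hG (hp.elim hG.support_subset id),
    1, _, _, 3, _, by norm_num, hullEqNewton_sum_sq gapMonomial, isSplit_sum_sq_gapMonomial,
    not_isProperConvexCover_sum_sq_gapMonomial⟩
  obtain ⟨G, hG, hN⟩ := hp.exists_soss_hullEqNewton
  exact ⟨G, hN, (hullEqNewton_iff.mp hN ▸ hF).isSplit hG (hG.support_subset hp)⟩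

/-- (1) Every convex cover polynomial is a split polynomial.
(2) More precisely, it is one with respect to `Tᵢ = {a ∈ V(p,G) : 2a ∈ Fᵢ}`, for all pairwise
disjoint faces `F₁, …, F_u` of `New(p)` covering `Support(p)` and all finite `G` with `SOSS(p,G)` and
`conv(G + G) = New(p)`; if `p` is not SOS, then `G` must in addition satisfy `Support(p) ⊆ G + G`
(for SOS `p` this is automatic).
(3) The converse fails when only proper faces are allowed in the cover. -/
theorem statement9 :
    (∀ (n : ℕ) (p : MvPolynomial (Fin n) ℝ), IsConvexCover p → IsSplitPolynomial p) ∧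
    (∀ (n : ℕ) (p : MvPolynomial (Fin n) ℝ) (u : ℕ) (F : Fin u → Set (Fin n → ℝ)),
      IsFaceCover p u F →
      ∀ G : Finset (Fin n →₀ ℕ), SOSS p G → HullEqNewton p G →
        (IsSOS p ∨ (p.support : Set (Fin n →₀ ℕ)) ⊆
          (G : Set (Fin n →₀ ℕ)) + (G : Set (Fin n →₀ ℕ))) →
        IsSplit p G u (fun i => {a | a ∈ VSet G ∧ toR (a + a) ∈ F i})) ∧
    (∃ (n : ℕ) (p : MvPolynomial (Fin n) ℝ) (G : Finset (Fin n →₀ ℕ)) (u : ℕ)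
      (T : Fin u → Set (Fin n →₀ ℕ)),
      2 ≤ u ∧ HullEqNewton p G ∧ IsSplit p G u T ∧ ¬ IsProperConvexCover p) :=
  ⟨fun n p _ => statement9_general.1 n p, fun n p u F hF G hG hN hp => statement9_general.2.2.1
    n p u F G (hullEqNewton_iff.mp hN ▸ hF.isExtremeCover) hG hp, statement9_general.2.2.2⟩
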